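/- Let α ≥ 0 and let k̄(v,u) = (|v-u| + |v-u|^{-1})·exp(-|v-u|²/8)·exp(-(|v|²-|u|²)²/(8|v-u|²)). Then there exists C_α > 0 such that for all v ∈ ℝ³, ∫_{ℝ³} k̄(v,u)²·(1+|v|²)^α/(1+|u|²)^α du ≤ C_α·(1+|v|)^{-1}. -/

import Mathlib

open MeasureTheory Real

/-- Peetre and exponential absorption: pointwise bound of the integrand. -/
lemma gk_pointwise (α : ℝ) (hα : 0 ≤ α) (v u : EuclideanSpace ℝ (Fin 3)) :
    ((‖v - u‖ + ‖v - u‖⁻¹) * Real.exp (-‖v - u‖ ^ 2 / 8) *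
            Real.exp (-(‖v‖ ^ 2 - ‖u‖ ^ 2) ^ 2 / (8 * ‖v - u‖ ^ 2))) ^ 2 *
          (1 + ‖v‖ ^ 2) ^ α / (1 + ‖u‖ ^ 2) ^ α
    ≤ (2 ^ α * ((16 * (α + 2)) ^ (α + 2) * exp (1 / 16))) *
      ((‖v - u‖ ^ 2)⁻¹ * exp (-(1 / 8) * ‖v - u‖ ^ 2) *
        exp (-(inner ℝ v (v - u)) ^ 2 / (8 * ‖v - u‖ ^ 2))) := by
  have hu : ‖u‖ ^ 2 = ‖v‖ ^ 2 - 2 * inner ℝ v (v - u) + ‖v - u‖ ^ 2 := by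
    have := norm_sub_sq_real v (v - u)
    rwa [sub_sub_cancel] at this
  have htri : ‖v‖ ≤ ‖u‖ + ‖v - u‖ := by
    have := norm_add_le u (v - u)
    rwa [add_sub_cancel] at this
  set r := ‖v - u‖ with hr
  set p := inner ℝ v (v - u) with hp
  have hr0 : 0 ≤ r := norm_nonneg _
  rcases hr0.eq_or_lt with h0 | hrpos
  · rw [← h0]; simp
  have hw : (1 + ‖v‖ ^ 2) ^ α / (1 + ‖u‖ ^ 2) ^ α ≤ 2 ^ α * (1 + r ^ 2) ^ α := by
    rw [div_le_iff₀ (by positivity), ← mul_rpow (by positivity) (by positivity),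
      ← mul_rpow (by positivity) (by positivity)]
    apply rpow_le_rpow (by positivity) _ hα
    have h1 : ‖v‖ ^ 2 ≤ (‖u‖ + r) ^ 2 := by gcongr
    nlinarith [sq_nonneg (‖u‖ - r), mul_nonneg (sq_nonneg ‖u‖) (sq_nonneg r)]
  have habs : (1 + r ^ 2) ^ (α + 2) ≤ (16 * (α + 2)) ^ (α + 2) * exp (1 / 16) * exp (r ^ 2 / 16) := by
    have hy : 1 + r ^ 2 ≤ (16 * (α + 2)) * exp ((1 + r ^ 2) / (16 * (α + 2))) := by
      have := add_one_le_exp ((1 + r ^ 2) / (16 * (α + 2)))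
      have h2 : (1 + r ^ 2) / (16 * (α + 2)) ≤ exp ((1 + r ^ 2) / (16 * (α + 2))) := by linarith
      rwa [div_le_iff₀ (by positivity), mul_comm] at h2
    calc (1 + r ^ 2) ^ (α + 2)
        ≤ ((16 * (α + 2)) * exp ((1 + r ^ 2) / (16 * (α + 2)))) ^ (α + 2) :=
          rpow_le_rpow (by positivity) hy (by positivity)
      _ = (16 * (α + 2)) ^ (α + 2) * exp (1 / 16) * exp (r ^ 2 / 16) := by
          rw [mul_rpow (by positivity) (by positivity), ← exp_mul, mul_assoc, ← exp_add]
          congr 2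
          field_simp
  have hsplit : (1 + r ^ 2) ^ (α + 2) = (1 + r ^ 2) ^ α * (1 + r ^ 2) ^ 2 := by
    rw [rpow_add (by positivity)]; norm_num
  have hexp : exp (r ^ 2 / 16) * (exp (-r ^ 2 / 8) * exp (-(‖v‖ ^ 2 - ‖u‖ ^ 2) ^ 2 / (8 * r ^ 2))) ^ 2
      ≤ exp (-(1 / 8) * r ^ 2) * exp (-p ^ 2 / (8 * r ^ 2)) := by
    rw [← exp_add, ← exp_nat_mul, ← exp_add, ← exp_add, exp_le_exp, hu]
    obtain ⟨t, ht⟩ : ∃ t, p = t * r := ⟨p / r, by field_simp⟩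
    rw [ht]
    have e1 : -(‖v‖ ^ 2 - (‖v‖ ^ 2 - 2 * (t * r) + r ^ 2)) ^ 2 / (8 * r ^ 2) = -(2 * t - r) ^ 2 / 8 := by
      field_simp; ring
    have e2 : -(t * r) ^ 2 / (8 * r ^ 2) = -t ^ 2 / 8 := by
      field_simp
    rw [e1, e2]
    push_cast
    nlinarith [sq_nonneg (7 * t - 4 * r), sq_nonneg r]
  set E := exp (-r ^ 2 / 8) * exp (-(‖v‖ ^ 2 - ‖u‖ ^ 2) ^ 2 / (8 * r ^ 2)) with hE
  calc _ = (r ^ 2)⁻¹ * (1 + r ^ 2) ^ 2 * E ^ 2 * ((1 + ‖v‖ ^ 2) ^ α / (1 + ‖u‖ ^ 2) ^ α) := by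
        rw [hE]; field_simp; ring
    _ ≤ (r ^ 2)⁻¹ * (1 + r ^ 2) ^ 2 * E ^ 2 * (2 ^ α * (1 + r ^ 2) ^ α) := by gcongr
    _ = 2 ^ α * (r ^ 2)⁻¹ * E ^ 2 * (1 + r ^ 2) ^ (α + 2) := by rw [hsplit]; ring
    _ ≤ 2 ^ α * (r ^ 2)⁻¹ * E ^ 2 * ((16 * (α + 2)) ^ (α + 2) * exp (1 / 16) * exp (r ^ 2 / 16)) := by
        gcongr
    _ = (2 ^ α * ((16 * (α + 2)) ^ (α + 2) * exp (1 / 16)) * (r ^ 2)⁻¹) * (exp (r ^ 2 / 16) * E ^ 2) := by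
        ring
    _ ≤ (2 ^ α * ((16 * (α + 2)) ^ (α + 2) * exp (1 / 16)) * (r ^ 2)⁻¹) *
        (exp (-(1 / 8) * r ^ 2) * exp (-p ^ 2 / (8 * r ^ 2))) := by gcongr
    _ = _ := by ring

/-- The radial majorant in dimension three is integrable. -/
lemma gk_int1 : Integrable (fun z : EuclideanSpace ℝ (Fin 3) =>
    (‖z‖ ^ 2)⁻¹ * exp (-(1 / 8) * ‖z‖ ^ 2)) := by
  refine (integrable_fun_norm_addHaar (volume : Measure (EuclideanSpace ℝ (Fin 3)))
    (f := fun r : ℝ => (r ^ 2)⁻¹ * exp (-(1 / 8) * r ^ 2))).2 ?_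
  have h := (integrable_exp_neg_mul_sq (b := 1 / 8) (by norm_num)).integrableOn (s := Set.Ioi 0)
  refine h.congr_fun (fun x hx => ?_) measurableSet_Ioi
  have hx : 0 < x := hx
  simp only [finrank_euclideanSpace, Fintype.card_fin, smul_eq_mul]
  norm_num
  field_simp

/-- The radial majorant in dimension two is integrable. -/
lemma gk_int2 : Integrable (fun y : Fin 2 → ℝ =>
    ‖y‖⁻¹ * exp (-(1 / 8) * ‖y‖ ^ 2)) := by
  refine (integrable_fun_norm_addHaar (volume : Measure (Fin 2 → ℝ))
    (f := fun r : ℝ => r⁻¹ * exp (-(1 / 8) * r ^ 2))).2 ?_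
  have h := (integrable_exp_neg_mul_sq (b := 1 / 8) (by norm_num)).integrableOn (s := Set.Ioi 0)
  refine h.congr_fun (fun x hx => ?_) measurableSet_Ioi
  have hx : 0 < x := hx
  simp only [Module.finrank_fin_fun, smul_eq_mul]
  norm_num
  field_simp

/-- The cylindrical majorant. -/
noncomputable def gkCyl (l : ℝ) (q : ℝ × (Fin 2 → ℝ)) : ℝ :=
  (‖q.2‖ ^ 2)⁻¹ * exp (-(1 / 8) * ‖q.2‖ ^ 2) * exp (-(l ^ 2 / (24 * ‖q.2‖ ^ 2)) * q.1 ^ 2)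

lemma gkCyl_section (l : ℝ) (hl : 0 < l) (y : Fin 2 → ℝ) :
    ∫ x : ℝ, gkCyl l (x, y) = √(24 * π) / l * (‖y‖⁻¹ * exp (-(1 / 8) * ‖y‖ ^ 2)) := by
  simp only [gkCyl]
  rw [integral_const_mul, integral_gaussian]
  rcases (norm_nonneg y).eq_or_lt with h | h
  · rw [← h]; simp
  have : π / (l ^ 2 / (24 * ‖y‖ ^ 2)) = (24 * π) * (‖y‖ / l) ^ 2 := by field_simp
  rw [this, sqrt_mul (by positivity), sqrt_sq (by positivity)]
  field_simp

lemma gkCyl_integrable (l : ℝ) (hl : 0 < l) :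
    Integrable (gkCyl l) (volume.prod volume) := by
  have hm : Measurable (gkCyl l) := by
    unfold gkCyl
    fun_prop
  rw [integrable_prod_iff' hm.aestronglyMeasurable]
  constructor
  · refine Filter.Eventually.of_forall fun y => ?_
    simp only [gkCyl]
    rcases (norm_nonneg y).eq_or_lt with h | h
    · rw [← h]; simp
    · exact (integrable_exp_neg_mul_sq (by positivity)).const_mul _
  · have : (fun y => ∫ x : ℝ, ‖gkCyl l (x, y)‖) =
        fun y => √(24 * π) / l * (‖y‖⁻¹ * exp (-(1 / 8) * ‖y‖ ^ 2)) := by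
      funext y
      rw [← gkCyl_section l hl]
      congr 1; funext x
      exact norm_of_nonneg (by unfold gkCyl; positivity)
    rw [this]
    exact gk_int2.const_mul _

lemma gkCyl_integral (l : ℝ) (hl : 0 < l) :
    ∫ q, gkCyl l q ∂(volume.prod volume) =
      √(24 * π) / l * ∫ y : Fin 2 → ℝ, ‖y‖⁻¹ * exp (-(1 / 8) * ‖y‖ ^ 2) := by
  rw [integral_prod_symm _ (gkCyl_integrable l hl), ← integral_const_mul]
  congr 1; funext y
  exact gkCyl_section l hl y

/-- Adapted coordinates. -/
lemma gk_coords (v : EuclideanSpace ℝ (Fin 3)) (hv : 0 < ‖v‖) :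
    ∃ Φ : EuclideanSpace ℝ (Fin 3) ≃ᵐ ℝ × (Fin 2 → ℝ),
      MeasurePreserving Φ volume (volume.prod volume) ∧
      ∀ z, inner ℝ v z = ‖v‖ * (Φ z).1 ∧
        ‖z‖ ^ 2 = (Φ z).1 ^ 2 + (Φ z).2 0 ^ 2 + (Φ z).2 1 ^ 2 := by
  obtain ⟨b, hb⟩ := Orthonormal.exists_orthonormalBasis_extension_of_card_eq (𝕜 := ℝ)
    (E := EuclideanSpace ℝ (Fin 3)) (ι := Fin 3) (by simp)
    (v := fun _ => ‖v‖⁻¹ • v) (s := {0}) (by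
      rw [orthonormal_iff_ite]
      rintro ⟨i, hi⟩ ⟨j, hj⟩
      simp only [Set.mem_singleton_iff] at hi hj
      subst hi; subst hj
      have : ‖‖v‖⁻¹ • v‖ = 1 := by rw [norm_smul, norm_inv, norm_norm]; field_simp
      simp [Set.domRestrict, this])
  have hb0 := hb 0 rfl
  refine ⟨(b.measurableEquiv.trans (MeasurableEquiv.toLp 2 (Fin 3 → ℝ)).symm).trans
    (MeasurableEquiv.piFinSuccAbove (fun _ => ℝ) 0), ?_, ?_⟩
  · exact (volume_preserving_piFinSuccAbove (fun _ : Fin 3 => ℝ) 0).comp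
      ((EuclideanSpace.volume_preserving_symm_measurableEquiv_toLp (Fin 3)).comp
        b.measurePreserving_measurableEquiv)
  · intro z
    constructor
    · change inner ℝ v z = ‖v‖ * b.repr z 0
      rw [b.repr_apply_apply, hb0, inner_smul_left]
      simp
      field_simp
    · change ‖z‖ ^ 2 = b.repr z 0 ^ 2 + b.repr z 1 ^ 2 + b.repr z 2 ^ 2
      rw [← b.repr.norm_map z, EuclideanSpace.norm_sq_eq, Fin.sum_univ_three]
      simp

lemma gk_cyl_pointwise (l x r p : ℝ) (y : Fin 2 → ℝ) (hl : 1 ≤ l) (hr0 : 0 ≤ r)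
    (hp : p = l * x) (hr : r ^ 2 = x ^ 2 + y 0 ^ 2 + y 1 ^ 2) :
    (r ^ 2)⁻¹ * exp (-(1 / 8) * r ^ 2) * exp (-p ^ 2 / (8 * r ^ 2)) ≤
      48 * (1 + l)⁻¹ * ((r ^ 2)⁻¹ * exp (-(1 / 8) * r ^ 2)) + gkCyl l (x, y) := by
  have hcyl : 0 ≤ gkCyl l (x, y) := by unfold gkCyl; positivity
  rcases hr0.eq_or_lt with h0 | hrpos
  · rw [← h0]; simpa using hcyl
  have n0 : y 0 ^ 2 ≤ ‖y‖ ^ 2 := by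
    rw [← sq_abs]; have := norm_le_pi_norm y 0; rw [norm_eq_abs] at this; gcongr
  have n1 : y 1 ^ 2 ≤ ‖y‖ ^ 2 := by
    rw [← sq_abs]; have := norm_le_pi_norm y 1; rw [norm_eq_abs] at this; gcongr
  have n2 : ‖y‖ ^ 2 ≤ r ^ 2 := by
    have : ‖y‖ ≤ r := by
      rw [pi_norm_le_iff_of_nonneg hr0]
      intro i
      rw [norm_eq_abs]
      apply abs_le_of_sq_le_sq _ hr0
      fin_cases i <;> simp <;> nlinarith [sq_nonneg x, sq_nonneg (y 0), sq_nonneg (y 1)]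
    gcongr
  subst hp
  by_cases hc : ‖y‖ ^ 2 ≤ x ^ 2
  · have hx : r ^ 2 ≤ 3 * x ^ 2 := by linarith
    have h1 : -(l * x) ^ 2 / (8 * r ^ 2) ≤ -(l ^ 2 / 24) := by
      rw [div_le_iff₀ (by positivity)]
      nlinarith [mul_le_mul_of_nonneg_left hx (sq_nonneg l)]
    have h2 : exp (-(l ^ 2 / 24)) ≤ 48 * (1 + l)⁻¹ := by
      rw [exp_neg, ← div_eq_mul_inv, inv_le_comm₀ (exp_pos _) (by positivity), inv_div]
      have := add_one_le_exp (l ^ 2 / 24)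
      nlinarith
    have h3 := (exp_le_exp.2 h1).trans h2
    calc _ ≤ (r ^ 2)⁻¹ * exp (-(1 / 8) * r ^ 2) * (48 * (1 + l)⁻¹) := by gcongr
      _ = 48 * (1 + l)⁻¹ * ((r ^ 2)⁻¹ * exp (-(1 / 8) * r ^ 2)) := by ring
      _ ≤ _ := by linarith
  · push Not at hc
    have hy : 0 < ‖y‖ ^ 2 := lt_of_le_of_lt (sq_nonneg x) hc
    have hx : r ^ 2 ≤ 3 * ‖y‖ ^ 2 := by linarith
    have h1 : -(l * x) ^ 2 / (8 * r ^ 2) ≤ -(l ^ 2 / (24 * ‖y‖ ^ 2)) * x ^ 2 := by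
      have : (l * x) ^ 2 / (8 * (3 * ‖y‖ ^ 2)) ≤ (l * x) ^ 2 / (8 * r ^ 2) := by gcongr
      calc _ = -((l * x) ^ 2 / (8 * r ^ 2)) := by ring
        _ ≤ -((l * x) ^ 2 / (8 * (3 * ‖y‖ ^ 2))) := by linarith
        _ = _ := by field_simp; ring
    have : (r ^ 2)⁻¹ * exp (-(1 / 8) * r ^ 2) * exp (-(l * x) ^ 2 / (8 * r ^ 2)) ≤ gkCyl l (x, y) := by
      unfold gkCyl
      simp only
      have h2 : exp (-(1 / 8) * r ^ 2) ≤ exp (-(1 / 8) * ‖y‖ ^ 2) := by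
        rw [exp_le_exp]; linarith
      gcongr
    have h4 : 0 ≤ 48 * (1 + l)⁻¹ * ((r ^ 2)⁻¹ * exp (-(1 / 8) * r ^ 2)) := by positivity
    linarith

/-- Reduced majorant estimate. -/
lemma gk_major : ∃ C : ℝ, 0 < C ∧ ∀ v : EuclideanSpace ℝ (Fin 3),
    ∃ H : EuclideanSpace ℝ (Fin 3) → ℝ, Integrable H ∧
      (∀ z, (‖z‖ ^ 2)⁻¹ * exp (-(1 / 8) * ‖z‖ ^ 2) *
        exp (-(inner ℝ v z) ^ 2 / (8 * ‖z‖ ^ 2)) ≤ H z) ∧ ∫ z, H z ≤ C * (1 + ‖v‖)⁻¹ := by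
  set J1 := ∫ z : EuclideanSpace ℝ (Fin 3), (‖z‖ ^ 2)⁻¹ * exp (-(1 / 8) * ‖z‖ ^ 2) with hJ1
  set J2 := ∫ y : Fin 2 → ℝ, ‖y‖⁻¹ * exp (-(1 / 8) * ‖y‖ ^ 2) with hJ2
  have hJ1n : 0 ≤ J1 := integral_nonneg fun z => by positivity
  have hJ2n : 0 ≤ J2 := integral_nonneg fun z => by positivity
  refine ⟨48 * J1 + 2 * √(24 * π) * J2 + 1, by positivity, fun v => ?_⟩
  rcases lt_or_ge ‖v‖ 1 with hv | hv
  · refine ⟨_, gk_int1, fun z => ?_, ?_⟩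
    · refine mul_le_of_le_one_right (by positivity) ?_
      rw [exp_le_one_iff, neg_div]
      have : 0 ≤ (inner ℝ v z) ^ 2 / (8 * ‖z‖ ^ 2) := by positivity
      linarith
    · rw [← hJ1, ← div_eq_mul_inv, le_div_iff₀ (by positivity)]
      have : 0 ≤ 2 * √(24 * π) * J2 := by positivity
      nlinarith
  · have hv0 : 0 < ‖v‖ := by linarith
    obtain ⟨Φ, hΦ, hz⟩ := gk_coords v hv0
    have i1 := gk_int1.const_mul (48 * (1 + ‖v‖)⁻¹)
    have i2 : Integrable (fun z => gkCyl ‖v‖ (Φ z)) :=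
      hΦ.integrable_comp_of_integrable (gkCyl_integrable ‖v‖ hv0)
    refine ⟨_, i1.add i2, fun z => ?_, ?_⟩
    · exact gk_cyl_pointwise ‖v‖ (Φ z).1 ‖z‖ _ (Φ z).2 hv (norm_nonneg _) (hz z).1 (hz z).2
    · have := integral_add i1 i2
      simp only [Pi.add_apply]
      rw [this, integral_const_mul, ← hJ1, hΦ.integral_comp', gkCyl_integral _ hv0, ← hJ2]
      have h : ‖v‖⁻¹ ≤ 2 * (1 + ‖v‖)⁻¹ := by
        rw [← div_eq_mul_inv, inv_le_comm₀ hv0 (by positivity), inv_div]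
        linarith
      have h2 : √(24 * π) / ‖v‖ * J2 ≤ √(24 * π) * (2 * (1 + ‖v‖)⁻¹) * J2 := by
        rw [div_eq_mul_inv]; gcongr
      have h3 : 0 < (1 + ‖v‖)⁻¹ := by positivity
      linarith

/-- Square-integrability estimate for the weighted Grad kernel:
`∫ k̄(v,u)² (1+|v|²)^α (1+|u|²)^{-α} du ≤ C_α (1+|v|)⁻¹`. -/
theorem grad_kernel_square_estimate (α : ℝ) (hα : 0 ≤ α) :
    ∃ C : ℝ, 0 < C ∧ ∀ v : EuclideanSpace ℝ (Fin 3),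
      (∫ u : EuclideanSpace ℝ (Fin 3),
        ((‖v - u‖ + ‖v - u‖⁻¹) * Real.exp (-‖v - u‖ ^ 2 / 8) *
            Real.exp (-(‖v‖ ^ 2 - ‖u‖ ^ 2) ^ 2 / (8 * ‖v - u‖ ^ 2))) ^ 2 *
          (1 + ‖v‖ ^ 2) ^ α / (1 + ‖u‖ ^ 2) ^ α)
        ≤ C * (1 + ‖v‖)⁻¹ := by
  obtain ⟨C, hC, h⟩ := gk_major
  refine ⟨(2 ^ α * ((16 * (α + 2)) ^ (α + 2) * exp (1 / 16))) * C, by positivity, fun v => ?_⟩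
  obtain ⟨H, hH, hle, hint⟩ := h v
  have hK : 0 ≤ 2 ^ α * ((16 * (α + 2)) ^ (α + 2) * exp (1 / 16)) := by positivity
  refine (integral_mono_of_nonneg (Filter.Eventually.of_forall fun u => by positivity)
    ((hH.comp_sub_left v).const_mul _) (Filter.Eventually.of_forall fun u =>
      (gk_pointwise α hα v u).trans (mul_le_mul_of_nonneg_left (hle (v - u)) hK))).trans ?_
  rw [integral_const_mul, integral_sub_left_eq_self H volume v, mul_assoc _ C]
  exact mul_le_mul_of_nonneg_left hint hK
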